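/- Any singular norm F on a finite-dimensional real vector space V is the limit, uniformly on compact subsets of V, of a sequence of smooth Minkowski norms Fₙ on V. -/

import Mathlib

/-- A singular norm: continuous, nonnegative, positive on nonzero vectors,
positively homogeneous of degree one, and convex. -/
def IsSingularNorm {V : Type*} [NormedAddCommGroup V] [NormedSpace ℝ V] (F : V → ℝ) : Prop :=
  Continuous F ∧ (∀ v, 0 ≤ F v) ∧ (∀ v, v ≠ 0 → 0 < F v) ∧
    (∀ (c : ℝ), 0 ≤ c → ∀ v, F (c • v) = c * F v) ∧ ConvexOn ℝ Set.univ F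

/-- A (smooth) Minkowski norm: a singular norm that is smooth away from the origin and
whose Hessian of `F²/2` is positive definite at every nonzero point. -/
def IsMinkowskiNorm {V : Type*} [NormedAddCommGroup V] [NormedSpace ℝ V] (F : V → ℝ) : Prop :=
  IsSingularNorm F ∧ ContDiffOn ℝ (⊤ : ℕ∞) F {v : V | v ≠ 0} ∧
    ∀ v : V, v ≠ 0 → ∀ w : V, w ≠ 0 →
      0 < fderiv ℝ (fun y => fderiv ℝ (fun z => F z ^ 2 / 2) y w) v w

open Filter Topology

lemma hess_nonneg {V : Type*} [NormedAddCommGroup V] [NormedSpace ℝ V]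
    (f : V → ℝ) (hf : ConvexOn ℝ Set.univ f) (v w : V) (hs : ContDiffAt ℝ 2 f v) :
    0 ≤ fderiv ℝ (fun y => fderiv ℝ f y w) v w := by
  have hline : ∀ t : ℝ, HasDerivAt (fun t : ℝ => v + t • w) w t := fun t => by
    simpa using ((hasDerivAt_id t).smul_const w).const_add v
  have hcont : Tendsto (fun t : ℝ => v + t • w) (𝓝 0) (𝓝 v) := by
    simpa using (hline 0).continuousAt.tendsto
  have hdiff : ∀ᶠ y in 𝓝 v, DifferentiableAt ℝ f y := by
    filter_upwards [hs.eventually (by simp)] with y hy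
    exact hy.differentiableAt (by norm_num)
  have hg : ∀ᶠ t : ℝ in 𝓝 0,
      HasDerivAt (fun t : ℝ => f (v + t • w)) (fderiv ℝ f (v + t • w) w) t := by
    filter_upwards [hcont.eventually hdiff] with t ht
    exact ht.hasFDerivAt.comp_hasDerivAt t (hline t)
  have hconv : ConvexOn ℝ Set.univ (fun t : ℝ => f (v + t • w)) := by
    refine ⟨convex_univ, fun x _ y _ a b ha hb hab => ?_⟩
    have := hf.2 (Set.mem_univ (v + x • w)) (Set.mem_univ (v + y • w)) ha hb hab
    refine le_trans (le_of_eq ?_) this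
    refine congrArg f ?_
    have hb' : b = 1 - a := by linarith
    subst hb'
    simp only [smul_eq_mul]
    module
  have hd2 : DifferentiableAt ℝ (fun y => fderiv ℝ f y w) v := by
    have h1 : ContDiffAt ℝ 1 (fderiv ℝ f) v := hs.fderiv_right (by norm_num)
    exact (h1.differentiableAt (by norm_num)).clm_apply (differentiableAt_const w)
  have hφ : HasDerivAt (fun t : ℝ => fderiv ℝ f (v + t • w) w)
      (fderiv ℝ (fun y => fderiv ℝ f y w) v w) 0 := by
    have h0 : v + (0 : ℝ) • w = v := by simp
    have hd2' : HasFDerivAt (fun y => fderiv ℝ f y w)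
      (fderiv ℝ (fun y => fderiv ℝ f y w) v) (v + (0 : ℝ) • w) := by
      rw [h0]; exact hd2.hasFDerivAt
    exact hd2'.comp_hasDerivAt (0 : ℝ) (hline 0)
  have hlim := (hasDerivAt_iff_tendsto_slope.1 hφ).mono_left
    (nhdsWithin_mono (0 : ℝ) (show Set.Ioi (0 : ℝ) ⊆ {0}ᶜ from fun x hx => ne_of_gt hx))
  refine ge_of_tendsto hlim ?_
  have hg0 := hg.self_of_nhds
  filter_upwards [self_mem_nhdsWithin, nhdsWithin_le_nhds hg] with t ht hgt
  have ht' : (0 : ℝ) < t := ht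
  have h1 := hconv.le_slope_of_hasDerivAt (Set.mem_univ 0) (Set.mem_univ t) ht' hg0
  have h2 := hconv.slope_le_of_hasDerivAt (Set.mem_univ 0) (Set.mem_univ t) ht' hgt
  rw [slope_def_field]
  apply div_nonneg
  · linarith
  · linarith

lemma lse_tangent {ι : Type*} (S : Finset ι) (hS : S.Nonempty) (s0 : ι → ℝ) :
    ∃ (p : ι → ℝ) (H : ℝ), (∀ i ∈ S, 0 ≤ p i) ∧ 0 ≤ H ∧
      (∀ s : ι → ℝ, ∑ i ∈ S, p i * s i + H ≤ Real.log (∑ i ∈ S, Real.exp (s i))) ∧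
      ∑ i ∈ S, p i * s0 i + H = Real.log (∑ i ∈ S, Real.exp (s0 i)) := by
  set Z := ∑ i ∈ S, Real.exp (s0 i) with hZ
  have hZpos : 0 < Z := Finset.sum_pos (fun i _ => Real.exp_pos _) hS
  have hp0 : ∀ i ∈ S, 0 ≤ Real.exp (s0 i) / Z := fun i _ => by positivity
  have hp1 : ∑ i ∈ S, Real.exp (s0 i) / Z = 1 := by
    rw [← Finset.sum_div, ← hZ, div_self hZpos.ne']
  refine ⟨fun i => Real.exp (s0 i) / Z, Real.log Z - ∑ i ∈ S, Real.exp (s0 i) / Z * s0 i,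
    hp0, ?_, ?_, by ring⟩
  · rw [sub_nonneg]
    calc ∑ i ∈ S, Real.exp (s0 i) / Z * s0 i ≤ ∑ i ∈ S, Real.exp (s0 i) / Z * Real.log Z := by
          refine Finset.sum_le_sum fun i hi => mul_le_mul_of_nonneg_left ?_ (hp0 i hi)
          rw [Real.le_log_iff_exp_le hZpos]
          exact Finset.single_le_sum (f := fun i => Real.exp (s0 i))
            (fun j _ => (Real.exp_pos _).le) hi
      _ = Real.log Z := by rw [← Finset.sum_mul, hp1, one_mul]
  · intro s
    have hT : 0 < ∑ i ∈ S, Real.exp (s i) := Finset.sum_pos (fun i _ => Real.exp_pos _) hS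
    have hj := convexOn_exp.map_sum_le (t := S) (w := fun i => Real.exp (s0 i) / Z)
      (p := fun i => s i - s0 i) hp0 hp1 (fun i _ => Set.mem_univ _)
    simp only [smul_eq_mul] at hj
    have he : ∑ i ∈ S, Real.exp (s0 i) / Z * Real.exp (s i - s0 i)
        = (∑ i ∈ S, Real.exp (s i)) / Z := by
      rw [Finset.sum_div]
      refine Finset.sum_congr rfl fun i _ => ?_
      rw [Real.exp_sub]
      have := (Real.exp_pos (s0 i)).ne'
      field_simp
    rw [he, ← Real.le_log_iff_exp_le (by positivity), Real.log_div hT.ne' hZpos.ne'] at hj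
    simp only [mul_sub, Finset.sum_sub_distrib] at hj
    linarith

/-- Homogenised soft maximum of the functionals in `S` with scale function `t`. -/
noncomputable def softMax {V : Type*} [NormedAddCommGroup V] [NormedSpace ℝ V]
    (S : Finset (V →L[ℝ] ℝ)) (t : V → ℝ) (v : V) : ℝ :=
  t v * Real.log (∑ l ∈ S, Real.exp (l v / t v))

section
variable {V : Type*} [NormedAddCommGroup V] [NormedSpace ℝ V]
  {S : Finset (V →L[ℝ] ℝ)} {t : V → ℝ}

lemma le_softMax (ht : ∀ v, v ≠ 0 → 0 < t v) (t0 : t 0 = 0) {l : V →L[ℝ] ℝ} (hl : l ∈ S) (v : V) :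
    l v ≤ softMax S t v := by
  by_cases hv : v = 0
  · simp [hv, softMax, t0]
  have h := ht v hv
  have hZ : 0 < ∑ l ∈ S, Real.exp (l v / t v) :=
    Finset.sum_pos (fun i _ => Real.exp_pos _) ⟨l, hl⟩
  have : l v / t v ≤ Real.log (∑ l ∈ S, Real.exp (l v / t v)) := by
    rw [Real.le_log_iff_exp_le hZ]
    exact Finset.single_le_sum (f := fun l : V →L[ℝ] ℝ => Real.exp (l v / t v))
            (fun j _ => (Real.exp_pos _).le) hl
  rw [div_le_iff₀ h] at this
  unfold softMax
  linarith

lemma softMax_le (ht : ∀ v, v ≠ 0 → 0 < t v) (t0 : t 0 = 0) (hS : S.Nonempty) (v : V) (M : ℝ)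
    (hM : ∀ l ∈ S, l v ≤ M) : softMax S t v ≤ M + t v * Real.log S.card := by
  by_cases hv : v = 0
  · obtain ⟨l, hl⟩ := hS
    have := hM l hl
    simp [hv] at this
    simp [hv, softMax, t0, this]
  have h := ht v hv
  have hZ : 0 < ∑ l ∈ S, Real.exp (l v / t v) :=
    Finset.sum_pos (fun i _ => Real.exp_pos _) hS
  have hc : (0 : ℝ) < S.card := by exact_mod_cast hS.card_pos
  have h1 : ∑ l ∈ S, Real.exp (l v / t v) ≤ S.card * Real.exp (M / t v) := by
    rw [← nsmul_eq_mul]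
    refine Finset.sum_le_card_nsmul _ _ _ fun l hl => ?_
    have := hM l hl
    gcongr
  have h2 := Real.log_le_log hZ h1
  rw [Real.log_mul hc.ne' (Real.exp_pos _).ne', Real.log_exp] at h2
  have h3 := mul_le_mul_of_nonneg_left h2 h.le
  unfold softMax
  refine h3.trans (le_of_eq ?_)
  field_simp
  ring

lemma softMax_smul (thom : ∀ c : ℝ, 0 ≤ c → ∀ v, t (c • v) = c * t v) (c : ℝ) (hc : 0 ≤ c) (v : V) :
    softMax S t (c • v) = c * softMax S t v := by
  rcases hc.eq_or_lt with rfl | hc'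
  · simp [softMax, thom 0 le_rfl v, -zero_smul]
  unfold softMax
  rw [thom c hc]
  have : ∀ l : V →L[ℝ] ℝ, l (c • v) / (c * t v) = l v / t v := fun l => by
    rw [map_smul, smul_eq_mul, mul_div_mul_left _ _ hc'.ne']
  simp only [this]
  ring

lemma softMax_convex (ht : ∀ v, v ≠ 0 → 0 < t v) (t0 : t 0 = 0) (tc : ConvexOn ℝ Set.univ t)
    (h0 : (0 : V →L[ℝ] ℝ) ∈ S) : ConvexOn ℝ Set.univ (softMax S t) := by
  refine ⟨convex_univ, fun x _ y _ a b ha hb hab => ?_⟩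
  have hnn : ∀ v, 0 ≤ softMax S t v := fun v => by simpa using le_softMax ht t0 h0 v
  by_cases hz : a • x + b • y = 0
  · rw [hz]
    have : softMax S t 0 = 0 := by simp [softMax, t0]
    rw [this]
    have := hnn x
    have := hnn y
    simp only [smul_eq_mul]
    positivity
  obtain ⟨p, H, hp, hH, hle, heq⟩ := lse_tangent S ⟨_, h0⟩
    (fun l => l (a • x + b • y) / t (a • x + b • y))
  have key : ∀ v, ∑ l ∈ S, p l * l v + t v * H ≤ softMax S t v := fun v => by
    by_cases hv : v = 0
    · simp [hv, softMax, t0]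
    have h := ht v hv
    have h1 := mul_le_mul_of_nonneg_left (hle (fun l => l v / t v)) h.le
    refine le_trans (le_of_eq ?_) h1
    rw [mul_add, Finset.mul_sum]
    congr 1
    refine Finset.sum_congr rfl fun l _ => ?_
    field_simp
  have keq : softMax S t (a • x + b • y)
      = ∑ l ∈ S, p l * l (a • x + b • y) + t (a • x + b • y) * H := by
    have h := ht _ hz
    unfold softMax
    rw [← heq, mul_add, Finset.mul_sum]
    congr 1
    refine Finset.sum_congr rfl fun l _ => ?_
    field_simp
  rw [keq]
  have h1 := mul_le_mul_of_nonneg_right (tc.2 (Set.mem_univ x) (Set.mem_univ y) ha hb hab) hH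
  have h2 := mul_le_mul_of_nonneg_left (key x) ha
  have h3 := mul_le_mul_of_nonneg_left (key y) hb
  have h4 : ∑ l ∈ S, p l * l (a • x + b • y)
      = a * ∑ l ∈ S, p l * l x + b * ∑ l ∈ S, p l * l y := by
    rw [Finset.mul_sum, Finset.mul_sum, ← Finset.sum_add_distrib]
    refine Finset.sum_congr rfl fun l _ => ?_
    simp only [map_add, map_smul, smul_eq_mul]
    ring
  rw [h4]
  simp only [smul_eq_mul] at *
  nlinarith

lemma softMax_contDiffAt (ht : ∀ v, v ≠ 0 → 0 < t v) (hS : S.Nonempty) {v : V} (hv : v ≠ 0)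
    (ts : ContDiffAt ℝ (⊤ : ℕ∞) t v) : ContDiffAt ℝ (⊤ : ℕ∞) (softMax S t) v := by
  unfold softMax
  refine ts.mul (ContDiffAt.log ?_ ?_)
  · refine ContDiffAt.sum fun l _ => ContDiffAt.exp ?_
    exact l.contDiff.contDiffAt.div ts (ht v hv).ne'
  · exact (Finset.sum_pos (fun i _ => Real.exp_pos _) hS).ne'
end

lemma sqrt_mink (a b x₁ x₂ y₁ y₂ : ℝ) (ha : 0 ≤ a) (hb : 0 ≤ b) :
    √((a * x₁ + b * x₂) ^ 2 + (a * y₁ + b * y₂) ^ 2)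
      ≤ a * √(x₁ ^ 2 + y₁ ^ 2) + b * √(x₂ ^ 2 + y₂ ^ 2) := by
  have h : ∀ x y : ℝ, √(x ^ 2 + y ^ 2) = ‖(⟨x, y⟩ : ℂ)‖ := fun x y => by
    rw [Complex.norm_eq_sqrt_sq_add_sq]
  rw [h, h, h]
  have : (⟨a * x₁ + b * x₂, a * y₁ + b * y₂⟩ : ℂ) = (a : ℂ) * ⟨x₁, y₁⟩ + (b : ℂ) * ⟨x₂, y₂⟩ := by
    apply Complex.ext <;> simp
  rw [this]
  refine (norm_add_le _ _).trans ?_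
  rw [norm_mul, norm_mul, Complex.norm_real, Complex.norm_real, Real.norm_of_nonneg ha,
    Real.norm_of_nonneg hb]

/-- Adding a Euclidean square to a convex, smooth, homogeneous function gives a Minkowski norm. -/
lemma minkowski_of {V E : Type*} [NormedAddCommGroup V] [NormedSpace ℝ V] [FiniteDimensional ℝ V]
    [NormedAddCommGroup E] [InnerProductSpace ℝ E] (A : V ≃L[ℝ] E) (G : V → ℝ)
    (G0 : ∀ v, 0 ≤ G v) (Gh : ∀ c : ℝ, 0 ≤ c → ∀ v, G (c • v) = c * G v)
    (Gc : ConvexOn ℝ Set.univ G) (Gs : ∀ v, v ≠ 0 → ContDiffAt ℝ (⊤ : ℕ∞) G v)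
    (d : ℝ) (hd : 0 < d) : IsMinkowskiNorm (fun v => √(G v ^ 2 + (d * ‖A v‖) ^ 2)) := by
  have hApos : ∀ v, v ≠ 0 → 0 < ‖A v‖ := fun v hv => by simpa using hv
  have hpos : ∀ v, v ≠ 0 → 0 < G v ^ 2 + (d * ‖A v‖) ^ 2 := fun v hv => by
    have := hApos v hv
    positivity
  have hconv : ConvexOn ℝ Set.univ (fun v => √(G v ^ 2 + (d * ‖A v‖) ^ 2)) := by
    refine ⟨convex_univ, fun x _ y _ a b ha hb hab => ?_⟩
    have h1 := Gc.2 (Set.mem_univ x) (Set.mem_univ y) ha hb hab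
    have h2 : ‖A (a • x + b • y)‖ ≤ a * ‖A x‖ + b * ‖A y‖ := by
      rw [map_add, map_smul, map_smul]
      refine (norm_add_le _ _).trans ?_
      rw [norm_smul, norm_smul, Real.norm_of_nonneg ha, Real.norm_of_nonneg hb]
    have h3 := G0 (a • x + b • y)
    simp only [smul_eq_mul] at *
    refine le_trans (Real.sqrt_le_sqrt ?_)
      (sqrt_mink a b (G x) (G y) (d * ‖A x‖) (d * ‖A y‖) ha hb)
    have h4 : d * ‖A (a • x + b • y)‖ ≤ a * (d * ‖A x‖) + b * (d * ‖A y‖) := by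
      nlinarith
    gcongr
  refine ⟨⟨?_, fun v => Real.sqrt_nonneg _, fun v hv => Real.sqrt_pos.2 (hpos v hv), ?_, hconv⟩,
    ?_, ?_⟩
  · exact hconv.locallyLipschitz.continuous
  · intro c hc v
    simp only
    rw [Gh c hc, map_smul, norm_smul, Real.norm_of_nonneg hc]
    rw [show (c * G v) ^ 2 + (d * (c * ‖A v‖)) ^ 2 = c ^ 2 * (G v ^ 2 + (d * ‖A v‖) ^ 2) by ring,
      Real.sqrt_mul (by positivity), Real.sqrt_sq hc]
  · intro v hv
    refine ContDiffAt.contDiffWithinAt ?_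
    have hA : ContDiffAt ℝ (⊤ : ℕ∞) (fun v => ‖A v‖) v :=
      A.contDiff.contDiffAt.norm ℝ (norm_pos_iff.1 (hApos v hv))
    exact (((Gs v hv).pow 2).add ((contDiffAt_const.mul hA).pow 2)).sqrt (hpos v hv).ne'
  · intro v hv w hw
    have e1 : (fun z => √(G z ^ 2 + (d * ‖A z‖) ^ 2) ^ 2 / 2)
        = fun z => G z ^ 2 / 2 + d ^ 2 / 2 * ‖A z‖ ^ 2 := by
      funext z
      rw [Real.sq_sqrt (by positivity)]
      ring
    rw [e1]
    have hGs : ContDiffAt ℝ 2 (fun z => G z ^ 2 / 2) v :=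
      (((Gs v hv).pow 2).div_const 2).of_le (WithTop.coe_le_coe.2 (le_top : (2 : ℕ∞) ≤ ⊤))
    have hGc : ConvexOn ℝ Set.univ (fun z => G z ^ 2 / 2) := by
      have := (Gc.pow (fun x _ => G0 x) 2).smul (show (0 : ℝ) ≤ 1 / 2 by norm_num)
      refine this.congr fun x _ => ?_
      simp
      ring
    have hh := hess_nonneg _ hGc v w hGs
    have hdiff : ∀ᶠ y in 𝓝 v, DifferentiableAt ℝ (fun z => G z ^ 2 / 2) y := by
      filter_upwards [hGs.eventually (by simp)] with y hy
      exact hy.differentiableAt (by norm_num)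
    have hq : ∀ y, HasFDerivAt (fun z => d ^ 2 / 2 * ‖A z‖ ^ 2)
        ((d ^ 2 / 2) • (2 • (innerSL ℝ (A y)).comp (A : V →L[ℝ] E))) y := fun y => by
      have := (A.hasFDerivAt (x := y)).norm_sq.const_mul (d ^ 2 / 2)
      exact this
    have e2 : (fun y => fderiv ℝ (fun z => G z ^ 2 / 2 + d ^ 2 / 2 * ‖A z‖ ^ 2) y w)
        =ᶠ[𝓝 v] fun y => fderiv ℝ (fun z => G z ^ 2 / 2) y w + d ^ 2 * inner ℝ (A w) (A y) := by
      filter_upwards [hdiff] with y hy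
      have := (hy.hasFDerivAt.add (hq y)).fderiv
      erw [this]
      simp [real_inner_comm]
      ring
    rw [e2.fderiv_eq]
    have hd2 : DifferentiableAt ℝ (fun y => fderiv ℝ (fun z => G z ^ 2 / 2) y w) v := by
      have h1 : ContDiffAt ℝ 1 (fderiv ℝ (fun z => G z ^ 2 / 2)) v := hGs.fderiv_right (by norm_num)
      exact (h1.differentiableAt (by norm_num)).clm_apply (differentiableAt_const w)
    have hl : HasFDerivAt (fun y => d ^ 2 * inner ℝ (A w) (A y))
        (d ^ 2 • (innerSL ℝ (A w)).comp (A : V →L[ℝ] E)) v := by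
      exact ((innerSL ℝ (A w)).comp (A : V →L[ℝ] E)).hasFDerivAt.const_mul (d ^ 2)
    have := (hd2.hasFDerivAt.add hl).fderiv
    erw [this]
    have hw' := hApos w hw
    have : 0 < d ^ 2 * ‖A w‖ ^ 2 := by positivity
    simp
    linarith

lemma exists_support {V : Type*} [NormedAddCommGroup V] [NormedSpace ℝ V] [FiniteDimensional ℝ V]
    (F : V → ℝ) (hF : IsSingularNorm F) (v : V) :
    ∃ l : V →L[ℝ] ℝ, l v = F v ∧ ∀ x, l x ≤ F x := by
  obtain ⟨hc, h0, hp, hh, hconv⟩ := hF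
  have hF0 : F 0 = 0 := by simpa using hh 0 le_rfl 0
  by_cases hv : v = 0
  · exact ⟨0, by simp [hv, hF0], fun x => by simpa using h0 x⟩
  have hadd : ∀ x y, F (x + y) ≤ F x + F y := fun x y => by
    have h1 := hconv.2 (Set.mem_univ ((2 : ℝ) • x)) (Set.mem_univ ((2 : ℝ) • y))
      (show (0 : ℝ) ≤ 1 / 2 by norm_num) (show (0 : ℝ) ≤ 1 / 2 by norm_num) (by norm_num)
    rw [hh 2 (by norm_num), hh 2 (by norm_num), smul_smul, smul_smul] at h1
    norm_num at h1
    linarith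
  obtain ⟨g, hg1, hg2⟩ := exists_extension_of_le_sublinear (LinearPMap.mkSpanSingleton v (F v) hv) F
    (fun c hc x => hh c hc.le x) hadd (by
      rintro ⟨x, hx⟩
      obtain ⟨c, rfl⟩ := Submodule.mem_span_singleton.1 hx
      erw [LinearPMap.mkSpanSingleton'_apply, smul_eq_mul]
      rcases le_total 0 c with hc | hc
      · simp [hh c hc]
      · exact (mul_nonpos_of_nonpos_of_nonneg hc (h0 v)).trans (h0 _))
  refine ⟨LinearMap.toContinuousLinearMap g, ?_, fun x => by simpa using hg2 x⟩
  have := hg1 ⟨v, Submodule.mem_span_singleton_self v⟩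
  rw [LinearPMap.mkSpanSingleton_apply] at this
  simpa using this

lemma exists_finset {V : Type*} [NormedAddCommGroup V] [NormedSpace ℝ V] [FiniteDimensional ℝ V]
    (F : V → ℝ) (hF : IsSingularNorm F) (ε : ℝ) (hε : 0 < ε) :
    ∃ S : Finset (V →L[ℝ] ℝ), 0 ∈ S ∧ (∀ l ∈ S, ∀ x, l x ≤ F x) ∧
      ∀ x, ∃ l ∈ S, F x - ε * ‖x‖ ≤ l x := by
  classical
  choose L hL1 hL2 using exists_support F hF
  obtain ⟨hc, h0, hp, hh, hconv⟩ := hF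
  have hF0 : F 0 = 0 := by simpa using hh 0 le_rfl 0
  obtain ⟨T, hT⟩ := (isCompact_sphere (0 : V) 1).elim_finite_subcover
    (fun v : V => {x | F x - ε < L v x})
    (fun v => isOpen_lt (by fun_prop) (by fun_prop))
    (fun v _ => Set.mem_iUnion.2 ⟨v, by simp [hL1, hε]⟩)
  refine ⟨insert 0 (T.image L), by simp, ?_, ?_⟩
  · intro l hl x
    simp only [Finset.mem_insert, Finset.mem_image] at hl
    rcases hl with rfl | ⟨v, _, rfl⟩
    · simpa using h0 x
    · exact hL2 v x
  · intro x
    by_cases hx : x = 0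
    · exact ⟨0, by simp, by simp [hx, hF0]⟩
    have hn : 0 < ‖x‖ := norm_pos_iff.2 hx
    have hmem : ‖x‖⁻¹ • x ∈ Metric.sphere (0 : V) 1 := by
      simp [norm_smul, hn.ne']
    obtain ⟨v, hv, hvx⟩ := Set.mem_iUnion₂.1 (hT hmem)
    refine ⟨L v, by simp; exact Or.inr ⟨v, hv, rfl⟩, ?_⟩
    simp only [Set.mem_ofPred_eq, map_smul, smul_eq_mul, hh _ (inv_nonneg.2 hn.le)] at hvx
    have := mul_le_mul_of_nonneg_left hvx.le hn.le
    rw [mul_sub, mul_inv_cancel_left₀ hn.ne', mul_inv_cancel_left₀ hn.ne'] at this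
    linarith

lemma exists_approx {V : Type*} [NormedAddCommGroup V] [NormedSpace ℝ V] [FiniteDimensional ℝ V]
    (F : V → ℝ) (hF : IsSingularNorm F) (ε : ℝ) (hε : 0 < ε) :
    ∃ F' : V → ℝ, IsMinkowskiNorm F' ∧ ∀ x, |F x - F' x| ≤ ε * ‖x‖ := by
  obtain ⟨S, hS0, hSle, hSge⟩ := exists_finset F hF (ε / 2) (by positivity)
  have hSn : S.Nonempty := ⟨0, hS0⟩
  let A := toEuclidean (E := V)
  obtain ⟨C, hC, hA⟩ : ∃ C : ℝ, 0 < C ∧ ∀ x, ‖A x‖ ≤ C * ‖x‖ := by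
    refine ⟨‖(A : V →L[ℝ] EuclideanSpace ℝ (Fin (Module.finrank ℝ V)))‖ + 1, by positivity, fun x => ?_⟩
    have := (A : V →L[ℝ] EuclideanSpace ℝ (Fin (Module.finrank ℝ V))).le_opNorm x
    have h2 := norm_nonneg x
    simp only [ContinuousLinearEquiv.coe_coe] at this
    linarith
  have hlog : 0 ≤ Real.log S.card := Real.log_natCast_nonneg _
  set N := Real.log S.card with hN
  set η : ℝ := ε / (2 * C * (N + 1)) with hη
  set d : ℝ := ε / (2 * C) with hd
  have hηpos : 0 < η := by positivity
  have hdpos : 0 < d := by positivity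
  let t : V → ℝ := fun v => η * ‖A v‖
  have ht : ∀ v, v ≠ 0 → 0 < t v := fun v hv => by
    have : 0 < ‖A v‖ := by simpa using hv
    positivity
  have t0 : t 0 = 0 := by simp [t]
  have thom : ∀ c : ℝ, 0 ≤ c → ∀ v, t (c • v) = c * t v := fun c hc v => by
    simp only [t, map_smul, norm_smul, Real.norm_of_nonneg hc]
    ring
  have tc : ConvexOn ℝ Set.univ t := by
    refine ⟨convex_univ, fun x _ y _ a b ha hb hab => ?_⟩
    have h2 : ‖A (a • x + b • y)‖ ≤ a * ‖A x‖ + b * ‖A y‖ := by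
      rw [map_add, map_smul, map_smul]
      refine (norm_add_le _ _).trans ?_
      rw [norm_smul, norm_smul, Real.norm_of_nonneg ha, Real.norm_of_nonneg hb]
    simp only [t, smul_eq_mul]
    nlinarith
  have ts : ∀ v, v ≠ 0 → ContDiffAt ℝ (⊤ : ℕ∞) t v := fun v hv =>
    contDiffAt_const.mul (A.contDiff.contDiffAt.norm ℝ (by simpa using hv))
  have Gnn : ∀ v, 0 ≤ softMax S t v := fun v => by simpa using le_softMax ht t0 hS0 v
  refine ⟨_, minkowski_of A (softMax S t) Gnn (softMax_smul thom) (softMax_convex ht t0 tc hS0)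
    (fun v hv => softMax_contDiffAt ht hSn hv (ts v hv)) d hdpos, fun x => ?_⟩
  obtain ⟨l, hl, hlx⟩ := hSge x
  have h1 := le_softMax ht t0 hl x
  have h2 := softMax_le ht t0 hSn x (F x) (fun l hl => hSle l hl x)
  have h3 : softMax S t x ≤ √(softMax S t x ^ 2 + (d * ‖A x‖) ^ 2) :=
    Real.le_sqrt_of_sq_le (by nlinarith [sq_nonneg (d * ‖A x‖)])
  have h4 : √(softMax S t x ^ 2 + (d * ‖A x‖) ^ 2) ≤ softMax S t x + d * ‖A x‖ := by
    have := Gnn x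
    refine Real.sqrt_le_iff.2 ⟨by positivity, ?_⟩
    have : 0 ≤ softMax S t x * (d * ‖A x‖) := by positivity
    nlinarith
  have h5 : d * ‖A x‖ ≤ ε / 2 * ‖x‖ := by
    calc d * ‖A x‖ ≤ d * (C * ‖x‖) := by gcongr; exact hA x
      _ = ε / 2 * ‖x‖ := by rw [hd]; field_simp
  have h6 : t x * N ≤ ε / 2 * ‖x‖ := by
    calc t x * N ≤ t x * (N + 1) := by
          have : 0 ≤ t x := by positivity
          nlinarith
      _ = d * ‖A x‖ := by simp only [t, hη, hd]; field_simp
      _ ≤ _ := h5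
  have := norm_nonneg x
  rw [abs_le]
  constructor <;> nlinarith


/-- Any singular norm on a finite-dimensional real vector space is the limit, uniformly on
compact sets, of a sequence of smooth Minkowski norms. -/
theorem stmt_4 {V : Type*} [NormedAddCommGroup V] [NormedSpace ℝ V] [FiniteDimensional ℝ V]
    (F : V → ℝ) (hF : IsSingularNorm F) :
    ∃ Fn : ℕ → V → ℝ, (∀ n, IsMinkowskiNorm (Fn n)) ∧
      ∀ K : Set V, IsCompact K → TendstoUniformlyOn Fn F Filter.atTop K := by
  have hpos : ∀ n : ℕ, (0 : ℝ) < 1 / ((n : ℝ) + 1) := fun n => by positivity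
  choose Fn hFn hle using fun n : ℕ => exists_approx F hF (1 / ((n : ℝ) + 1)) (hpos n)
  refine ⟨Fn, hFn, fun K hK => ?_⟩
  obtain ⟨R, hR⟩ := hK.isBounded.exists_norm_le
  rw [Metric.tendstoUniformlyOn_iff]
  intro ε hε
  have hlim : Tendsto (fun n : ℕ => 1 / ((n : ℝ) + 1) * R) atTop (𝓝 0) := by
    simpa using tendsto_one_div_add_atTop_nhds_zero_nat.mul_const R
  filter_upwards [hlim.eventually (gt_mem_nhds hε)] with n hn x hx
  rw [Real.dist_eq]
  refine lt_of_le_of_lt (hle n x) (lt_of_le_of_lt ?_ hn)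
  exact mul_le_mul_of_nonneg_left (hR x hx) (hpos n).le
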